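/- arXiv:2402.02030 — 2 statements merged into one kernel-verified Lean document; each statement's English description precedes it below -/
import Mathlib

section
/- Let m ≥ 1 and let S ⊆ ℝ^m be a convex set. If r ∈ S is Pareto optimal in S, then there exists a preference vector λ in the simplex Δ_{m-1} (i.e., λ_i ≥ 0 for all i and ∑_{i=1}^m λ_i = 1) such that ⟨λ, r⟩ ≥ ⟨λ, r'⟩ for all r' ∈ S. (Consequently, under a convex objective space, the Pareto front F* equals the convex coverage set CCS.) -/
/-- If `S ⊆ ℝ^m` is convex and `r ∈ S` is Pareto optimal in `S`
(no `r' ∈ S` dominates `r`), then there is a preference vector `lam` in the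
simplex `Δ_{m-1}` with `⟨lam, r⟩ ≥ ⟨lam, r'⟩` for all `r' ∈ S`. -/
theorem pareto_optimal_of_convex_exists_simplex_supporting_weight
    (m : ℕ) (hm : 1 ≤ m) (S : Set (Fin m → ℝ)) (hS : Convex ℝ S)
    (r : Fin m → ℝ) (hr : r ∈ S)
    (hpareto : ¬ ∃ r' ∈ S, (∀ i, r i ≤ r' i) ∧ ∃ j, r j < r' j) :
    ∃ lam : Fin m → ℝ, (∀ i, 0 ≤ lam i) ∧ (∑ i, lam i = 1) ∧
      ∀ r' ∈ S, ∑ i, lam i * r' i ≤ ∑ i, lam i * r i := by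
  have : Nonempty (Fin m) := ⟨⟨0, hm⟩⟩
  have hopen : IsOpen {x : Fin m → ℝ | ∀ i, r i < x i} := by
    simp only [Set.ofPred_forall]
    exact isOpen_iInter_of_finite fun i => isOpen_lt continuous_const (continuous_apply i)
  have hconv : Convex ℝ {x : Fin m → ℝ | ∀ i, r i < x i} := by
    intro x hx y hy a b ha hb hab i
    have h := convex_Ioi (r i) (hx i) (hy i) ha hb hab
    simpa using h
  have hdisj : Disjoint {x : Fin m → ℝ | ∀ i, r i < x i} S := by
    rw [Set.disjoint_left]
    intro x hx hxS
    exact hpareto ⟨x, hxS, fun i => (hx i).le, ⟨0, hm⟩, hx _⟩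
  obtain ⟨f, u, hf, hu⟩ := geometric_hahn_banach_open hconv hopen hS hdisj
  obtain ⟨c, hc⟩ : ∃ c : Fin m → ℝ, ∀ x, f x = -∑ i, c i * x i := by
    refine ⟨fun i => -f (Pi.single i 1), fun x => ?_⟩
    have h := f.toLinearMap.pi_apply_eq_sum_univ x
    have h2 : ∀ i : Fin m, (fun j : Fin m => if i = j then (1 : ℝ) else 0) =
        (Pi.single i 1 : Fin m → ℝ) := by
      intro i; ext j; simp [Pi.single_apply, eq_comm]
    simp only [h2, ContinuousLinearMap.coe_coe] at h
    rw [h, ← Finset.sum_neg_distrib]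
    exact Finset.sum_congr rfl fun i _ => by simp [mul_comm]
  have key : ∀ d : Fin m → ℝ, (∀ i, 0 < d i) → ∑ i, c i * r i > -u - ∑ i, c i * d i := by
    intro d hd
    have h := hf (r + d) (fun i => by simpa using hd i)
    rw [hc] at h
    simp only [Pi.add_apply, mul_add, Finset.sum_add_distrib] at h
    linarith
  have hur := hu r hr
  rw [hc] at hur
  have hC : 0 < ∑ i, c i := by
    have h := key (fun _ => 1) (fun _ => one_pos)
    simp only [mul_one] at h
    linarith
  have hnn : ∀ i, 0 ≤ c i := by
    intro i
    by_contra! hi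
    have ht : 0 < (∑ j, c j) / (-c i) := div_pos hC (by linarith)
    have h := key (fun j => 1 + if j = i then (∑ j, c j) / (-c i) else 0)
      (fun j => by split_ifs <;> linarith)
    simp only [mul_add, mul_one, Finset.sum_add_distrib, mul_ite, mul_zero, Finset.sum_ite_eq',
      Finset.mem_univ, if_true] at h
    have h3 : c i * ((∑ j, c j) / (-c i)) = -∑ j, c j := by
      have := hi.ne
      field_simp
    linarith
  have hle : -u ≤ ∑ i, c i * r i := by
    refine le_of_forall_pos_lt_add fun ε hε => ?_
    have h := key (fun _ => ε / ∑ i, c i) (fun _ => div_pos hε hC)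
    rw [← Finset.sum_mul, mul_div_cancel₀ _ hC.ne'] at h
    linarith
  refine ⟨fun i => c i / ∑ j, c j, fun i => div_nonneg (hnn i) hC.le, ?_, fun x hx => ?_⟩
  · rw [← Finset.sum_div, div_self hC.ne']
  · have h := hu x hx
    rw [hc] at h
    simp only [div_mul_eq_mul_div, ← Finset.sum_div]
    exact div_le_div_of_nonneg_right (by linarith) hC.le
end

section
/- Let m ≥ 1, S ⊆ ℝ^m, and let z ∈ ℝ^m satisfy z_i > r'_i for all r' ∈ S and all i (a strict ideal vector). If r ∈ S is weakly Pareto optimal in S, then there exists λ ∈ Δ_{m-1} with λ_i > 0 for every i such that r maximizes the weighted Tchebycheff function g^Tche_λ(r') = min_{1 ≤ i ≤ m} λ_i (r'_i − z_i) over S. Together with the converse direction, a point of S is weakly Pareto optimal if and only if it is an optimal solution of the Tchebycheff function for some such preference vector. -/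
/-- Let `z` be a strict ideal vector for `S` (`z_i > r'_i` for all
`r' ∈ S`, all `i`) and let `r ∈ S`. Then `r` is weakly Pareto optimal in `S`
if and only if there exists a preference vector `lam ∈ Δ_{m-1}` with all
entries positive such that `r` maximizes the weighted Tchebycheff function
`r' ↦ min_{1 ≤ i ≤ m} lam i * (r' i - z i)` over `S`. -/
theorem weakly_pareto_optimal_iff_tchebycheff_maximizer
    (m : ℕ) (hm : 1 ≤ m) (S : Set (Fin m → ℝ))
    (z : Fin m → ℝ) (hz : ∀ r' ∈ S, ∀ i, r' i < z i)
    (r : Fin m → ℝ) (hr : r ∈ S) :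
    (¬ ∃ r' ∈ S, ∀ i, r i < r' i) ↔
      ∃ lam : Fin m → ℝ, (∀ i, 0 ≤ lam i) ∧ (∑ i, lam i = 1) ∧ (∀ i, 0 < lam i) ∧
        ∀ r' ∈ S,
          Finset.univ.inf' (Finset.univ_nonempty_iff.mpr ⟨⟨0, hm⟩⟩)
              (fun i => lam i * (r' i - z i)) ≤
            Finset.univ.inf' (Finset.univ_nonempty_iff.mpr ⟨⟨0, hm⟩⟩)
              (fun i => lam i * (r i - z i)) := by
  have hne : (Finset.univ : Finset (Fin m)).Nonempty :=
    Finset.univ_nonempty_iff.mpr ⟨⟨0, hm⟩⟩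
  constructor
  · intro h
    have hd : ∀ i, 0 < z i - r i := fun i => sub_pos.mpr (hz r hr i)
    have hC : 0 < ∑ j, (z j - r j)⁻¹ :=
      Finset.sum_pos (fun j _ => inv_pos.mpr (hd j)) hne
    have hpos : ∀ i, 0 < (z i - r i)⁻¹ / ∑ j, (z j - r j)⁻¹ :=
      fun i => div_pos (inv_pos.mpr (hd i)) hC
    refine ⟨fun i => (z i - r i)⁻¹ / ∑ j, (z j - r j)⁻¹, fun i => (hpos i).le, ?_, hpos, ?_⟩
    · rw [← Finset.sum_div]
      exact div_self hC.ne'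
    · intro r' hr'
      have hex : ∃ i, r' i ≤ r i := by
        by_contra hcon
        push Not at hcon
        exact h ⟨r', hr', hcon⟩
      obtain ⟨i, hi⟩ := hex
      have key : ∀ k, (z k - r k)⁻¹ / (∑ j, (z j - r j)⁻¹) * (r k - z k)
          = -(1 / ∑ j, (z j - r j)⁻¹) := by
        intro k
        have h1 : (z k - r k)⁻¹ * (z k - r k) = 1 := inv_mul_cancel₀ (hd k).ne'
        rw [div_mul_eq_mul_div, ← neg_div]
        congr 1
        linarith
      apply Finset.le_inf'
      intro k _
      refine (Finset.inf'_le _ (Finset.mem_univ i)).trans ?_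
      show _ ≤ (z k - r k)⁻¹ / (∑ j, (z j - r j)⁻¹) * (r k - z k)
      rw [key k, ← key i]
      exact mul_le_mul_of_nonneg_left (by linarith) (hpos i).le
  · rintro ⟨lam, -, -, hpos, hmax⟩ ⟨r', hr', hlt⟩
    refine absurd (hmax r' hr') (not_le.mpr ?_)
    rw [Finset.lt_inf'_iff]
    intro i _
    refine (Finset.inf'_le _ (Finset.mem_univ i)).trans_lt ?_
    exact mul_lt_mul_of_pos_left (by linarith [hlt i]) (hpos i)
end
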